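/- Under Assumptions 1, 2 and 3, suppose in addition ‖x(t)‖_v ≤ x̄ almost surely for all t, and α_t = h/(t+t0) with h > 2/σ and t0 ≥ max(4h, τ). Then for each t ≥ τ and each δ ∈ (0,1), with probability at least 1 − δ, ‖Σ_{k=τ}^{t} α_k B̃_{k,t} ε(k)‖_v ≤ 6 ε̄ √( ((τ+1)h/(σ(t+1+t0))) · log(2(τ+1) t n/δ) ), where ε̄ = 2x̄ + C + w̄/v̲. -/

import Mathlib

/-!
Fix a coordinate `i`. The weights `∏ (1 - α_l d_l)` are random and depend on the future of `ε(k)`,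
so no martingale bound applies to the weighted sum directly. Since `d_l ≥ σ`, however, these
weights are the deterministic weights `∏ (1 - α_l σ)` multiplied by products of ratios in `[0, 1]`,
and such a damped sum is a convex combination of the tail sums over `[k₀, t]` with deterministic
weights (`abs_damped_sum_le`). It therefore suffices to bound all these tail sums at once.

The noise `ε_i(k)` is `ℱ (k + 1)`-measurable, bounded by `ε̄ v_i` and centered given `ℱ (k - τ)`
(`noise_laggedMD`). Inside one residue class modulo `τ + 1` it is a martingale difference sequence,
and the Azuma–Hoeffding inequality holds (`LaggedMD.tail_le`); it is derived from the chord bound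
for the exponential, without conditional distributions. A union bound over the `n` coordinates, at
most `t` starting points `k₀` and `τ + 1` residue classes produces the logarithm. Cauchy–Schwarz
over the classes (`abs_sum_le_of_residues`) and the estimate
`∑ α_k² ∏ (1 - α_l σ)² ≤ 2h / (σ (t + 1 + t₀))` (`sum_sq_weights_le`) give the bound, with
constant `2` in place of `6`.
-/

open MeasureTheory Finset

/-- Weighted infinity norm `‖x‖_v = max_i |x_i| / v_i`. -/
noncomputable def vnorm {n : ℕ} (v x : Fin n → ℝ) : ℝ := ⨆ i, |x i| / v i

/-- The sequence `y` is a bounded martingale difference sequence with lag `τ`: each `y k` is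
`ℱ (k + 1)`-measurable, almost surely bounded by `c k`, and orthogonal to all essentially bounded
`ℱ (k - τ)`-measurable functions, i.e. `E[y k | ℱ (k - τ)] = 0`. The centering is phrased through
integrals since this is the form in which it is used. -/
structure LaggedMD {Ω : Type*} {m0 : MeasurableSpace Ω} (μ : Measure Ω) (ℱ : Filtration ℕ m0)
    (τ : ℕ) (y : ℕ → Ω → ℝ) (c : ℕ → ℝ) : Prop where
  meas : ∀ k, Measurable[ℱ (k + 1)] (y k)
  bound : ∀ k, ∀ᵐ ω ∂μ, |y k ω| ≤ c k
  centered : ∀ k (Z : Ω → ℝ) (K : ℝ), Measurable[ℱ (k - τ)] Z → (∀ᵐ ω ∂μ, |Z ω| ≤ K) →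
    ∫ ω, Z ω * y k ω ∂μ = 0

/-! ### Exponential moments and tails of lagged martingale differences -/

/-- On `[-c, c]` the convex function `y ↦ exp (s * y)` lies below its chord. -/
lemma exp_mul_le_chord (s c y : ℝ) (hy : |y| ≤ c) :
    Real.exp (s * y) ≤ Real.cosh (s * c) + Real.sinh (s * c) / c * y := by
  rcases (abs_nonneg y |>.trans hy).eq_or_lt with h0 | hc
  · have : y = 0 := by
      rw [← h0] at hy
      exact abs_eq_zero.mp (le_antisymm hy (abs_nonneg y))
    subst this
    simp [← h0]
  · obtain ⟨h1, h2⟩ := abs_le.mp hy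
    have key := convexOn_exp.2 (Set.mem_univ (s * c)) (Set.mem_univ (-(s * c)))
      (show 0 ≤ (c + y) / (2 * c) from div_nonneg (by linarith) (by linarith))
      (show 0 ≤ (c - y) / (2 * c) from div_nonneg (by linarith) (by linarith))
      (by field_simp; ring)
    simp only [smul_eq_mul] at key
    have e1 : (c + y) / (2 * c) * (s * c) + (c - y) / (2 * c) * -(s * c) = s * y := by
      field_simp; ring
    rw [e1] at key
    refine key.trans (le_of_eq ?_)
    rw [Real.cosh_eq, Real.sinh_eq]
    field_simp
    ring

lemma LaggedMD.sum_meas {Ω : Type*} {m0 : MeasurableSpace Ω} {μ : Measure Ω}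
    {ℱ : Filtration ℕ m0} {τ : ℕ} {y : ℕ → Ω → ℝ} {c : ℕ → ℝ} (H : LaggedMD μ ℱ τ y c)
    (A : Finset ℕ) (N : ℕ) (hA : ∀ k ∈ A, k + 1 ≤ N) :
    Measurable[ℱ N] (fun ω => ∑ k ∈ A, y k ω) :=
  Finset.measurable_sum _ fun k hk => (H.meas k).mono (ℱ.mono (hA k hk)) le_rfl

lemma LaggedMD.exp_bound {Ω : Type*} {m0 : MeasurableSpace Ω} {μ : Measure Ω}
    {ℱ : Filtration ℕ m0} {τ : ℕ} {y : ℕ → Ω → ℝ} {c : ℕ → ℝ} (H : LaggedMD μ ℱ τ y c)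
    (A : Finset ℕ) (s : ℝ) :
    ∀ᵐ ω ∂μ, |Real.exp (s * ∑ k ∈ A, y k ω)| ≤ Real.exp (|s| * ∑ k ∈ A, c k) := by
  filter_upwards [ae_all_iff.mpr H.bound] with ω hω
  rw [abs_of_pos (Real.exp_pos _)]
  refine Real.exp_le_exp.mpr ((le_abs_self _).trans ?_)
  rw [abs_mul]
  exact mul_le_mul_of_nonneg_left
    ((Finset.abs_sum_le_sum_abs _ _).trans (Finset.sum_le_sum fun k _ => hω k)) (abs_nonneg s)

lemma LaggedMD.exp_integrable {Ω : Type*} {m0 : MeasurableSpace Ω} {μ : Measure Ω}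
    [IsProbabilityMeasure μ]
    {ℱ : Filtration ℕ m0} {τ : ℕ} {y : ℕ → Ω → ℝ} {c : ℕ → ℝ} (H : LaggedMD μ ℱ τ y c)
    (A : Finset ℕ) (s : ℝ) :
    Integrable (fun ω => Real.exp (s * ∑ k ∈ A, y k ω)) μ := by
  refine Integrable.of_bound (Measurable.aestronglyMeasurable ?_) _ (H.exp_bound A s)
  refine Real.measurable_exp.comp (Measurable.const_mul ?_ s)
  exact Finset.measurable_sum _ fun k _ => (H.meas k).mono (ℱ.le _) le_rfl

/-- Azuma's exponential moment bound along indices at mutual distance greater than `τ`, where the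
lagged differences become genuine martingale differences. -/
lemma LaggedMD.mgf_le {Ω : Type*} {m0 : MeasurableSpace Ω} {μ : Measure Ω}
    [IsProbabilityMeasure μ]
    {ℱ : Filtration ℕ m0} {τ : ℕ} {y : ℕ → Ω → ℝ} {c : ℕ → ℝ} (H : LaggedMD μ ℱ τ y c)
    (s : ℝ) (A : Finset ℕ) (hA : ∀ j ∈ A, ∀ k ∈ A, j < k → j + (τ + 1) ≤ k) :
    ∫ ω, Real.exp (s * ∑ k ∈ A, y k ω) ∂μ ≤ Real.exp (s ^ 2 * (∑ k ∈ A, c k ^ 2) / 2) := by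
  induction A using Finset.induction_on_max with
  | empty => simp
  | insert a A hlt ih =>
    have ha : a ∉ A := fun h => lt_irrefl _ (hlt a h)
    specialize ih fun j hj k hk => hA j (Finset.mem_insert_of_mem hj) k (Finset.mem_insert_of_mem hk)
    have hsep : ∀ k ∈ A, k + 1 ≤ a - τ := fun k hk => by
      have := hA k (Finset.mem_insert_of_mem hk) a (Finset.mem_insert_self a A) (hlt k hk)
      omega
    set Z : Ω → ℝ := fun ω => Real.exp (s * ∑ k ∈ A, y k ω) with hZ
    have hZm : Measurable[ℱ (a - τ)] Z :=
      Real.measurable_exp.comp (Measurable.const_mul (H.sum_meas A _ hsep) s)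
    have hZi : Integrable Z μ := H.exp_integrable A s
    have hZy : ∫ ω, Z ω * y a ω ∂μ = 0 := H.centered a Z _ hZm (H.exp_bound A s)
    have hyi : Integrable (y a) μ :=
      Integrable.of_bound ((H.meas a).mono (ℱ.le _) le_rfl).aestronglyMeasurable _ (H.bound a)
    have hZyi : Integrable (fun ω => Z ω * y a ω) μ :=
      hyi.bdd_mul (hZm.mono (ℱ.le _) le_rfl).aestronglyMeasurable (H.exp_bound A s)
    calc ∫ ω, Real.exp (s * ∑ k ∈ insert a A, y k ω) ∂μ
        ≤ ∫ ω, (Real.cosh (s * c a) * Z ω + Real.sinh (s * c a) / c a * (Z ω * y a ω)) ∂μ := by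
          refine integral_mono_ae (H.exp_integrable _ s)
            ((hZi.const_mul _).add (hZyi.const_mul _)) ?_
          filter_upwards [H.bound a] with ω hω
          rw [Finset.sum_insert ha, mul_add, Real.exp_add]
          have := mul_le_mul_of_nonneg_right (exp_mul_le_chord s (c a) (y a ω) hω)
            (Real.exp_pos (s * ∑ k ∈ A, y k ω)).le
          refine this.trans (le_of_eq ?_)
          simp only [hZ]
          ring
      _ = Real.cosh (s * c a) * ∫ ω, Z ω ∂μ := by
          rw [integral_add (hZi.const_mul _) (hZyi.const_mul _), integral_const_mul,
            integral_const_mul, hZy]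
          ring
      _ ≤ Real.exp ((s * c a) ^ 2 / 2) * Real.exp (s ^ 2 * (∑ k ∈ A, c k ^ 2) / 2) :=
          mul_le_mul (Real.cosh_le_exp_half_sq _) ih
            (integral_nonneg fun ω => (Real.exp_pos _).le) (Real.exp_pos _).le
      _ = _ := by
          rw [← Real.exp_add, Finset.sum_insert ha]
          congr 1
          ring

/-- Azuma–Hoeffding tail bound, parametrised by the exponent `L`. -/
lemma LaggedMD.tail_le {Ω : Type*} {m0 : MeasurableSpace Ω} {μ : Measure Ω}
    [IsProbabilityMeasure μ]
    {ℱ : Filtration ℕ m0} {τ : ℕ} {y : ℕ → Ω → ℝ} {c : ℕ → ℝ} (H : LaggedMD μ ℱ τ y c)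
    (A : Finset ℕ) (hA : ∀ j ∈ A, ∀ k ∈ A, j < k → j + (τ + 1) ≤ k)
    (V L : ℝ) (hV : ∑ k ∈ A, c k ^ 2 ≤ V) (hL : 0 < L) :
    μ {ω | Real.sqrt (2 * V * L) < |∑ k ∈ A, y k ω|} ≤ ENNReal.ofReal (2 * Real.exp (-L)) := by
  have hV0 : 0 ≤ V := (Finset.sum_nonneg fun k _ => sq_nonneg (c k)).trans hV
  rcases hV0.eq_or_lt with h0 | hVpos
  -- when `V = 0` all increments on `A` vanish almost surely
  · refine le_of_eq_of_le ?_ zero_le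
    have hc : ∀ k ∈ A, c k = 0 := fun k hk => by
      have := (Finset.single_le_sum (f := fun k => c k ^ 2) (fun k _ => sq_nonneg (c k)) hk).trans hV
      have h2 : c k ^ 2 = 0 := le_antisymm (by simpa [← h0] using this) (sq_nonneg _)
      exact pow_eq_zero_iff (two_ne_zero) |>.mp h2
    have : ∀ᵐ ω ∂μ, ¬ Real.sqrt (2 * V * L) < |∑ k ∈ A, y k ω| := by
      filter_upwards [ae_all_iff.mpr H.bound] with ω hω
      have hs : ∑ k ∈ A, y k ω = 0 := Finset.sum_eq_zero fun k hk => by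
        have := hω k
        rw [hc k hk] at this
        exact abs_eq_zero.mp (le_antisymm this (abs_nonneg _))
      rw [hs, abs_zero]
      exact not_lt.mpr (Real.sqrt_nonneg _)
    simpa [ae_iff] using this
  · set u := Real.sqrt (2 * V * L) with hu
    -- the exponent optimising the Chernoff bound
    set s := u / V with hs
    have hu0 : 0 ≤ u := Real.sqrt_nonneg _
    have hs0 : 0 ≤ s := div_nonneg hu0 hV0
    have husq : u ^ 2 = 2 * V * L := Real.sq_sqrt (by positivity)
    have hsu : s * u = 2 * L := by
      rw [hs]; field_simp; linarith
    have hsV : s ^ 2 * V / 2 = L := by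
      rw [hs]; field_simp; linarith
    have mono : Real.exp (s ^ 2 * (∑ k ∈ A, c k ^ 2) / 2) ≤ Real.exp L := by
      refine Real.exp_le_exp.mpr ?_
      rw [← hsV]
      gcongr
    have up := ProbabilityTheory.measure_ge_le_exp_mul_mgf (μ := μ) (t := s) u hs0
      (H.exp_integrable A s)
    have dn := ProbabilityTheory.measure_le_le_exp_mul_mgf (μ := μ) (t := -s) (-u)
      (by linarith) (H.exp_integrable A (-s))
    have m1 := (H.mgf_le s A hA).trans mono
    have m2 := H.mgf_le (-s) A hA
    rw [neg_sq] at m2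
    have m3 := m2.trans mono
    have e : Real.exp (-(2 * L)) * Real.exp L = Real.exp (-L) := by
      rw [← Real.exp_add]; congr 1; ring
    have up' : μ.real {ω | u ≤ ∑ k ∈ A, y k ω} ≤ Real.exp (-L) := by
      refine up.trans ?_
      rw [← e, ← hsu, neg_mul]
      exact mul_le_mul_of_nonneg_left m1 (Real.exp_pos _).le
    have dn' : μ.real {ω | ∑ k ∈ A, y k ω ≤ -u} ≤ Real.exp (-L) := by
      refine dn.trans ?_
      rw [← e, ← hsu, show - -s * -u = -(s * u) by ring]
      exact mul_le_mul_of_nonneg_left m3 (Real.exp_pos _).le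
    have hsub : {ω | u < |∑ k ∈ A, y k ω|} ⊆
        {ω | u ≤ ∑ k ∈ A, y k ω} ∪ {ω | ∑ k ∈ A, y k ω ≤ -u} := by
      intro ω hω
      rcases lt_abs.mp (show u < |∑ k ∈ A, y k ω| from hω) with h | h
      · exact Or.inl h.le
      · exact Or.inr (show ∑ k ∈ A, y k ω ≤ -u by linarith)
    rw [← ofReal_measureReal]
    refine ENNReal.ofReal_le_ofReal ?_
    refine (measureReal_mono hsub).trans ((measureReal_union_le _ _).trans ?_)
    linarith

/-! ### Deterministic estimates -/

/-- Abel summation in multiplicative form: damping the summands by products of factors in `[0, 1]`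
gives a convex combination of the tail sums, so any bound for all tail sums is inherited. -/
lemma abs_damped_sum_le (a r : ℕ → ℝ) (M : ℝ) (τ t : ℕ) (ht : τ ≤ t)
    (hr : ∀ l ∈ Finset.Icc (τ + 1) t, 0 ≤ r l ∧ r l ≤ 1) (y : ℝ)
    (hM : ∀ k0 ∈ Finset.Icc τ t, |y + ∑ k ∈ Finset.Icc k0 t, a k| ≤ M) :
    |y + ∑ k ∈ Finset.Icc τ t, (∏ l ∈ Finset.Icc (k + 1) t, r l) * a k| ≤ M := by
  induction t, ht using Nat.le_induction generalizing y with
  | base => simpa using hM τ (by simp)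
  | succ t ht ih =>
    have hlast := hM (t + 1) (by simp; omega)
    simp only [Finset.Icc_self, Finset.sum_singleton] at hlast
    have h1 := ih (fun l hl => hr l (by simp at hl ⊢; omega)) (y + a (t + 1)) (fun k0 hk0 => by
      rw [Finset.mem_Icc] at hk0
      have := hM k0 (by simp; omega)
      rw [Finset.sum_Icc_succ_top (by omega)] at this
      convert this using 2
      ring)
    obtain ⟨r0, r1⟩ := hr (t + 1) (by simp; omega)
    have e : y + ∑ k ∈ Finset.Icc τ (t + 1), (∏ l ∈ Finset.Icc (k + 1) (t + 1), r l) * a k =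
        r (t + 1) * (y + a (t + 1) +
          ∑ k ∈ Finset.Icc τ t, (∏ l ∈ Finset.Icc (k + 1) t, r l) * a k) +
        (1 - r (t + 1)) * (y + a (t + 1)) := by
      have : ∑ k ∈ Finset.Icc τ t, (∏ l ∈ Finset.Icc (k + 1) (t + 1), r l) * a k =
          r (t + 1) * ∑ k ∈ Finset.Icc τ t, (∏ l ∈ Finset.Icc (k + 1) t, r l) * a k := by
        rw [Finset.mul_sum]
        refine Finset.sum_congr rfl fun k hk => ?_
        rw [Finset.mem_Icc] at hk
        rw [Finset.prod_Icc_succ_top (by omega)]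
        ring
      rw [Finset.sum_Icc_succ_top (by omega), this]
      simp
      ring
    rw [e]
    obtain ⟨p1, p2⟩ := abs_le.mp h1
    obtain ⟨q1, q2⟩ := abs_le.mp hlast
    refine abs_le.mpr ⟨?_, ?_⟩ <;> nlinarith

/-- The total variance proxy of the weights `α_k ∏_{k < l ≤ t} (1 - α_l σ)` is of order
`1 / (t + 1 + t₀)`. The condition `2 ≤ σ h` makes the damping win over the decay of the bound. -/
lemma sum_sq_weights_le (α : ℕ → ℝ) (h t0 sg : ℝ) (τ : ℕ) (hτ : 0 < τ) (hsg : 0 < sg)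
    (hsg1 : sg < 1) (ht0 : 0 < t0) (hh : 2 ≤ sg * h) (hα : ∀ t, α t ∈ Set.Ioc (0 : ℝ) 1)
    (hstep : ∀ t, α t = h / ((t : ℝ) + t0)) (t : ℕ) :
    ∑ k ∈ Finset.Icc τ t, (α k * ∏ l ∈ Finset.Icc (k + 1) t, (1 - α l * sg)) ^ 2 ≤
      2 * h / (sg * ((t : ℝ) + 1 + t0)) := by
  have hh0 : 0 < h := by
    by_contra hc
    nlinarith
  induction t with
  | zero =>
    rw [Finset.Icc_eq_empty (by omega), Finset.sum_empty]
    positivity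
  | succ t ih =>
    by_cases hc : τ ≤ t + 1
    · set S := ∑ k ∈ Finset.Icc τ t, (α k * ∏ l ∈ Finset.Icc (k + 1) t, (1 - α l * sg)) ^ 2 with hS
      have e : ∑ k ∈ Finset.Icc τ (t + 1),
          (α k * ∏ l ∈ Finset.Icc (k + 1) (t + 1), (1 - α l * sg)) ^ 2 =
          (1 - α (t + 1) * sg) ^ 2 * S + α (t + 1) ^ 2 := by
        rw [Finset.sum_Icc_succ_top hc, hS, Finset.mul_sum]
        congr 1
        · refine Finset.sum_congr rfl fun k hk => ?_
          rw [Finset.mem_Icc] at hk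
          rw [Finset.prod_Icc_succ_top (by omega)]
          ring
        · simp
      rw [e]
      have hx0 : 0 < α (t + 1) * sg := mul_pos (hα _).1 hsg
      have hx1 : α (t + 1) * sg ≤ 1 := by nlinarith [(hα (t + 1)).1, (hα (t + 1)).2]
      have hS0 : 0 ≤ S := Finset.sum_nonneg fun k _ => sq_nonneg _
      have s1 : (1 - α (t + 1) * sg) ^ 2 * S ≤
          (1 - α (t + 1) * sg) * (2 * h / (sg * ((t : ℝ) + 1 + t0))) := by
        refine mul_le_mul ?_ ih hS0 (by linarith)
        nlinarith
      refine (add_le_add_left s1 _).trans ?_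
      rw [hstep]
      push_cast
      set q : ℝ := (t : ℝ) + 1 + t0 with hq
      have hq0 : 0 < q := by positivity
      rw [show (t : ℝ) + 1 + 1 + t0 = q + 1 by rw [hq]; ring]
      have : 2 * h / (sg * (q + 1)) -
          ((1 - h / q * sg) * (2 * h / (sg * q)) + (h / q) ^ 2) =
          h * ((sg * h - 2) * q + sg * h) / (sg * q ^ 2 * (q + 1)) := by
        field_simp
        ring
      have h2 : 0 ≤ h * ((sg * h - 2) * q + sg * h) / (sg * q ^ 2 * (q + 1)) := by
        have : 0 ≤ (sg * h - 2) * q := mul_nonneg (by linarith) hq0.le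
        have : 0 ≤ sg * h := by linarith
        positivity
      linarith
    · rw [Finset.Icc_eq_empty hc, Finset.sum_empty]
      positivity

/-! ### The weighted norm and the noise of the scheme -/

lemma abs_le_vnorm_mul {n : ℕ} {v : Fin n → ℝ} (hv : ∀ i, 0 < v i) (x : Fin n → ℝ) (i : Fin n) :
    |x i| ≤ vnorm v x * v i := by
  rw [← div_le_iff₀ (hv i)]
  exact le_ciSup (f := fun i => |x i| / v i) (Set.finite_range _).bddAbove i

lemma vnorm_nonneg {n : ℕ} {v : Fin n → ℝ} (hv : ∀ i, 0 < v i) (x : Fin n → ℝ) :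
    0 ≤ vnorm v x :=
  Real.iSup_nonneg fun i => div_nonneg (abs_nonneg _) (hv i).le

lemma vnorm_le {n : ℕ} (hn : 0 < n) {v : Fin n → ℝ} (hv : ∀ i, 0 < v i) (x : Fin n → ℝ) (M : ℝ)
    (hx : ∀ i, |x i| ≤ M * v i) : vnorm v x ≤ M := by
  have : Nonempty (Fin n) := ⟨⟨0, hn⟩⟩
  exact ciSup_le fun i => (div_le_iff₀ (hv i)).mpr (hx i)

/-- A Lipschitz map for the weighted norm is continuous for the usual topology. -/
lemma continuous_of_vnorm_contr {n : ℕ} (hn : 0 < n) {v : Fin n → ℝ} (hv : ∀ i, 0 < v i)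
    (F : (Fin n → ℝ) → (Fin n → ℝ)) (γ : ℝ) (hγ0 : 0 < γ)
    (hcontr : ∀ x y, vnorm v (F x - F y) ≤ γ * vnorm v (x - y)) : Continuous F := by
  have hv1 : ∀ z : Fin n → ℝ, vnorm v z ≤ ‖z‖ * ∑ j, (v j)⁻¹ := fun z => by
    refine vnorm_le hn hv z _ fun i => ?_
    have h1 : |z i| ≤ ‖z‖ := norm_le_pi_norm z i
    have h2 : (v i)⁻¹ ≤ ∑ j, (v j)⁻¹ :=
      Finset.single_le_sum (f := fun j => (v j)⁻¹) (fun j _ => (inv_pos.mpr (hv j)).le)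
        (Finset.mem_univ i)
    have h3 : 1 ≤ (∑ j, (v j)⁻¹) * v i := by
      have := mul_le_mul_of_nonneg_right h2 (hv i).le
      rwa [inv_mul_cancel₀ (hv i).ne'] at this
    rw [mul_assoc]
    nlinarith [norm_nonneg z]
  refine continuous_pi fun i => ?_
  refine (LipschitzWith.of_dist_le_mul (K := Real.toNNReal (γ * (∑ j, (v j)⁻¹) * v i))
    fun x y => ?_).continuous
  have hS : 0 ≤ ∑ j, (v j)⁻¹ := Finset.sum_nonneg fun j _ => (inv_pos.mpr (hv j)).le
  rw [Real.coe_toNNReal _ (mul_nonneg (mul_nonneg hγ0.le hS) (hv i).le), Real.dist_eq, dist_eq_norm]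
  calc |F x i - F y i| ≤ vnorm v (F x - F y) * v i := abs_le_vnorm_mul hv (F x - F y) i
    _ ≤ (γ * (‖x - y‖ * ∑ j, (v j)⁻¹)) * v i := by
        refine mul_le_mul_of_nonneg_right ((hcontr x y).trans ?_) (hv i).le
        exact mul_le_mul_of_nonneg_left (hv1 _) hγ0.le
    _ = _ := by ring

/-- Self-adjointness of conditional expectation, against a measurable and bounded factor. -/
lemma integral_mul_condExp_eq {Ω : Type*} {m m0 : MeasurableSpace Ω} {μ : Measure Ω}
    [IsProbabilityMeasure μ] (hm : m ≤ m0) (Z f : Ω → ℝ) (K : ℝ) (hZ : Measurable[m] Z)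
    (hK : ∀ᵐ ω ∂μ, |Z ω| ≤ K) (hf : Integrable f μ) :
    ∫ ω, Z ω * (μ[f | m]) ω ∂μ = ∫ ω, Z ω * f ω ∂μ := by
  have hi : Integrable (Z * f) μ := hf.bdd_mul (hZ.mono hm le_rfl).aestronglyMeasurable hK
  have h1 := condExp_mul_of_stronglyMeasurable_left (μ := μ) hZ.stronglyMeasurable hi hf
  have h2 := integral_condExp (μ := μ) (f := Z * f) hm
  rw [integral_congr_ae h1] at h2
  exact h2

lemma LaggedMD.const_mul {Ω : Type*} {m0 : MeasurableSpace Ω} {μ : Measure Ω}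
    {ℱ : Filtration ℕ m0} {τ : ℕ} {y : ℕ → Ω → ℝ} {c : ℕ → ℝ} (H : LaggedMD μ ℱ τ y c)
    (q : ℕ → ℝ) (hq : ∀ k, 0 ≤ q k) :
    LaggedMD μ ℱ τ (fun k ω => q k * y k ω) (fun k => q k * c k) where
  meas k := (H.meas k).const_mul _
  bound k := by
    filter_upwards [H.bound k] with ω hω
    rw [abs_mul, abs_of_nonneg (hq k)]
    exact mul_le_mul_of_nonneg_left hω (hq k)
  centered k Z K hZ hK := by
    have := H.centered k Z K hZ hK
    simp_rw [mul_left_comm _ (q k)]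
    rw [integral_const_mul, this, mul_zero]

/-- Conditional probabilities lie in `[0, 1]`. -/
lemma condExp_indicator_mem {Ω : Type*} {m m0 : MeasurableSpace Ω} {μ : Measure Ω}
    [IsProbabilityMeasure μ] (hm : m ≤ m0) (f : Ω → ℝ) (hf : Integrable f μ)
    (h0 : ∀ ω, 0 ≤ f ω) (h1 : ∀ ω, f ω ≤ 1) :
    ∀ᵐ ω ∂μ, 0 ≤ (μ[f | m]) ω ∧ (μ[f | m]) ω ≤ 1 := by
  have a := condExp_mono (μ := μ) (m := m) (integrable_const (0 : ℝ)) hf (ae_of_all _ h0)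
  have b := condExp_mono (μ := μ) (m := m) hf (integrable_const (1 : ℝ)) (ae_of_all _ h1)
  rw [condExp_const hm] at a b
  filter_upwards [a, b] with ω ha hb
  exact ⟨ha, hb⟩

/-- Each coordinate of the noise `ε(k)` of the scheme is a lagged martingale difference sequence:
`i_k` is centered given `ℱ (k - τ)` by the choice of `d`, and `w k` is centered already
given `ℱ k`. -/
lemma noise_laggedMD {Ω : Type*} {m0 : MeasurableSpace Ω} (μ : Measure Ω) [IsProbabilityMeasure μ]
    (ℱ : Filtration ℕ m0)
    (n : ℕ) (v : Fin n → ℝ) (hv : ∀ i, 0 < v i)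
    (F : (Fin n → ℝ) → (Fin n → ℝ)) (γ C : ℝ) (hγ1 : γ < 1)
    (hFcont : Continuous F)
    (hFbd : ∀ x, vnorm v (F x) ≤ γ * vnorm v x + C)
    (idx : ℕ → Ω → Fin n) (hidx : ∀ t, Measurable[ℱ t] (idx t))
    (w : ℕ → Ω → ℝ) (wbar : ℝ) (X : ℕ → Ω → Fin n → ℝ)
    (hXm : ∀ t, Measurable[ℱ t] (X t))
    (hw_meas : ∀ t, Measurable[ℱ (t + 1)] (w t))
    (hw_mean : ∀ t, μ[w t | ℱ t] =ᵐ[μ] 0)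
    (hw_bd : ∀ t, ∀ᵐ ω ∂μ, |w t ω| ≤ wbar)
    (τ : ℕ) (d : ℕ → Fin n → Ω → ℝ)
    (hd : ∀ t i, d t i = μ[(fun ω => if idx t ω = i then (1 : ℝ) else 0) | ℱ (t - τ)])
    (xbar : ℝ) (hXbd : ∀ t, ∀ᵐ ω ∂μ, vnorm v (X t ω) ≤ xbar)
    (eps : ℕ → Ω → Fin n → ℝ)
    (heps : ∀ t ω i, eps t ω i =
      ((if idx t ω = i then (1 : ℝ) else 0) - d t i ω) *
          (F (X (t - τ) ω) i - X (t - τ) ω i) +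
        (if idx t ω = i then w t ω else 0)) (i : Fin n) :
    LaggedMD μ ℱ τ (fun k ω => eps k ω i) (fun _ => (2 * xbar + C) * v i + wbar) := by
  -- the indicator of `i_k = i` and the drift coordinate multiplying its centered version
  set ind : ℕ → Ω → ℝ := fun t ω => if idx t ω = i then (1 : ℝ) else 0 with hind
  set G : ℕ → Ω → ℝ := fun t ω => F (X (t - τ) ω) i - X (t - τ) ω i with hG
  have hindm : ∀ t, Measurable[ℱ t] (ind t) := fun t =>
    Measurable.ite (hidx t (measurableSet_singleton i)) measurable_const measurable_const
  have hindb : ∀ t ω, |ind t ω| ≤ 1 := fun t ω => by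
    simp only [hind]; split_ifs <;> simp
  have hindi : ∀ t, Integrable (ind t) μ := fun t =>
    Integrable.of_bound ((hindm t).mono (ℱ.le _) le_rfl).aestronglyMeasurable 1
      (ae_of_all _ (hindb t))
  have hGm : ∀ t, Measurable[ℱ (t - τ)] (G t) := fun t =>
    ((measurable_pi_apply i).comp (hFcont.measurable.comp (hXm (t - τ)))).sub
      ((measurable_pi_apply i).comp (hXm (t - τ)))
  have hGb : ∀ t, ∀ᵐ ω ∂μ, |G t ω| ≤ (2 * xbar + C) * v i := fun t => by
    filter_upwards [hXbd (t - τ)] with ω hω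
    have h1 := abs_le_vnorm_mul hv (F (X (t - τ) ω)) i
    have h2 := abs_le_vnorm_mul hv (X (t - τ) ω) i
    have h3 := hFbd (X (t - τ) ω)
    have h4 := vnorm_nonneg hv (X (t - τ) ω)
    refine (abs_sub _ _).trans ?_
    have h5 : vnorm v (F (X (t - τ) ω)) ≤ xbar + C := by nlinarith
    have := hv i
    nlinarith
  have hdm : ∀ t, Measurable[ℱ (t - τ)] (d t i) := fun t => by
    rw [hd]; exact stronglyMeasurable_condExp.measurable
  have hdb : ∀ t, ∀ᵐ ω ∂μ, 0 ≤ d t i ω ∧ d t i ω ≤ 1 := fun t => by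
    rw [hd]
    exact condExp_indicator_mem (ℱ.le _) (ind t) (hindi t)
      (fun ω => by simp only [hind]; split_ifs <;> simp)
      (fun ω => (le_abs_self _).trans (hindb t ω))
  have hform : ∀ k ω, eps k ω i = (ind k ω - d k i ω) * G k ω + ind k ω * w k ω := fun k ω => by
    rw [heps]
    simp only [hind, hG]
    split_ifs <;> simp
  have hle : ∀ k, ℱ (k - τ) ≤ ℱ k := fun k => ℱ.mono (Nat.sub_le k τ)
  have hsucc : ∀ k, ℱ k ≤ ℱ (k + 1) := fun k => ℱ.mono (Nat.le_succ k)
  refine ⟨fun k => ?_, fun k => ?_, fun k Z K hZ hK => ?_⟩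
  · simp_rw [hform]
    have a1 : Measurable[ℱ (k + 1)] (ind k) := (hindm k).mono (hsucc k) le_rfl
    have a2 : Measurable[ℱ (k + 1)] (d k i) := (hdm k).mono ((hle k).trans (hsucc k)) le_rfl
    have a3 : Measurable[ℱ (k + 1)] (G k) := (hGm k).mono ((hle k).trans (hsucc k)) le_rfl
    exact ((a1.sub a2).mul a3).add (a1.mul (hw_meas k))
  · filter_upwards [hdb k, hGb k, hw_bd k] with ω h1 h2 h3
    rw [hform]
    refine (abs_add_le _ _).trans (add_le_add ?_ ?_)
    · rw [abs_mul]
      have : |ind k ω - d k i ω| ≤ 1 := by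
        simp only [hind]
        split_ifs <;> rw [abs_le] <;> constructor <;> linarith [h1.1, h1.2]
      exact (mul_le_of_le_one_left (abs_nonneg _) this).trans h2
    · rw [abs_mul]
      exact (mul_le_of_le_one_left (abs_nonneg _) (hindb k ω)).trans h3
  · have hZG : Measurable[ℱ (k - τ)] (fun ω => Z ω * G k ω) := hZ.mul (hGm k)
    have hZGb : ∀ᵐ ω ∂μ, |Z ω * G k ω| ≤ K * ((2 * xbar + C) * v i) := by
      filter_upwards [hK, hGb k] with ω h1 h2
      rw [abs_mul]
      exact mul_le_mul h1 h2 (abs_nonneg _) ((abs_nonneg _).trans h1)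
    have hZi : Measurable[ℱ k] (fun ω => Z ω * ind k ω) := (hZ.mono (hle k) le_rfl).mul (hindm k)
    have hZib : ∀ᵐ ω ∂μ, |Z ω * ind k ω| ≤ K := by
      filter_upwards [hK] with ω h1
      rw [abs_mul]
      exact (mul_le_of_le_one_right (abs_nonneg _) (hindb k ω)).trans h1
    have hwi : Integrable (w k) μ :=
      Integrable.of_bound ((hw_meas k).mono (ℱ.le _) le_rfl).aestronglyMeasurable _ (hw_bd k)
    have hdi : Integrable (d k i) μ := by rw [hd]; exact integrable_condExp
    have I1 : Integrable (fun ω => Z ω * G k ω * ind k ω) μ :=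
      (hindi k).bdd_mul (hZG.mono (ℱ.le _) le_rfl).aestronglyMeasurable hZGb
    have I2 : Integrable (fun ω => Z ω * G k ω * d k i ω) μ :=
      hdi.bdd_mul (hZG.mono (ℱ.le _) le_rfl).aestronglyMeasurable hZGb
    have I3 : Integrable (fun ω => Z ω * ind k ω * w k ω) μ :=
      hwi.bdd_mul (hZi.mono (ℱ.le _) le_rfl).aestronglyMeasurable hZib
    have E1 : ∫ ω, Z ω * G k ω * d k i ω ∂μ = ∫ ω, Z ω * G k ω * ind k ω ∂μ := by
      rw [hd]
      exact integral_mul_condExp_eq (ℱ.le _) _ (ind k) _ hZG hZGb (hindi k)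
    have E2 : ∫ ω, Z ω * ind k ω * w k ω ∂μ = 0 := by
      rw [← integral_mul_condExp_eq (ℱ.le k) _ (w k) _ hZi hZib hwi]
      rw [← integral_zero Ω ℝ (μ := μ)]
      refine integral_congr_ae ?_
      filter_upwards [hw_mean k] with ω hω
      rw [hω]; simp
    have : (fun ω => Z ω * eps k ω i) = fun ω =>
        (Z ω * G k ω * ind k ω - Z ω * G k ω * d k i ω) + Z ω * ind k ω * w k ω := by
      funext ω
      rw [hform]
      ring
    have I12 : Integrable (fun ω => Z ω * G k ω * ind k ω - Z ω * G k ω * d k i ω) μ := I1.sub I2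
    rw [this, integral_add I12 I3, integral_sub I1 I2, E1, E2]
    ring

lemma LaggedMD.mono {Ω : Type*} {m0 : MeasurableSpace Ω} {μ : Measure Ω}
    {ℱ : Filtration ℕ m0} {τ : ℕ} {y : ℕ → Ω → ℝ} {c c' : ℕ → ℝ} (H : LaggedMD μ ℱ τ y c)
    (hc : ∀ k, c k ≤ c' k) : LaggedMD μ ℱ τ y c' :=
  ⟨H.meas, fun k => (H.bound k).mono fun _ h => h.trans (hc k), H.centered⟩

/-- The iterates are adapted. -/
lemma iterates_measurable {Ω : Type*} {m0 : MeasurableSpace Ω}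
    (ℱ : Filtration ℕ m0) (n : ℕ) (F : (Fin n → ℝ) → (Fin n → ℝ)) (hF : Continuous F)
    (idx : ℕ → Ω → Fin n) (hidx : ∀ t, Measurable[ℱ t] (idx t))
    (w : ℕ → Ω → ℝ) (α : ℕ → ℝ)
    (X : ℕ → Ω → Fin n → ℝ) (hX0 : ∀ ω, X 0 ω = 0)
    (hupd : ∀ t ω i, X (t + 1) ω i =
      if i = idx t ω then X t ω i + α t * (F (X t ω) i - X t ω i + w t ω) else X t ω i)
    (hw_meas : ∀ t, Measurable[ℱ (t + 1)] (w t)) (t : ℕ) : Measurable[ℱ t] (X t) := by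
  induction t with
  | zero =>
    rw [show X 0 = fun _ => 0 from funext hX0]
    exact measurable_const
  | succ t ih =>
    have hm : ℱ t ≤ ℱ (t + 1) := ℱ.mono (Nat.le_succ t)
    have ih' : Measurable[ℱ (t + 1)] (X t) := ih.mono hm le_rfl
    have hi : Measurable[ℱ (t + 1)] (idx t) := (hidx t).mono hm le_rfl
    refine @measurable_pi_lambda _ _ _ (ℱ (t + 1)) _ _ fun i => ?_
    have hXi : Measurable[ℱ (t + 1)] (fun ω => X t ω i) := (measurable_pi_apply i).comp ih'
    have hFi : Measurable[ℱ (t + 1)] (fun ω => F (X t ω) i) :=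
      (measurable_pi_apply i).comp (hF.measurable.comp ih')
    simp_rw [hupd]
    refine Measurable.ite ?_ (hXi.add (((hFi.sub hXi).add (hw_meas t)).const_mul _)) hXi
    have := hi (measurableSet_singleton i)
    convert this using 1
    ext ω
    simp [eq_comm]

/-- Bounding each residue class modulo `N` by its own square root deviation loses only a factor
`√N` overall, by Cauchy–Schwarz. -/
lemma abs_sum_le_of_residues (y : ℕ → ℝ) (A : Finset ℕ) (N : ℕ) (hN : 0 < N) (V : ℕ → ℝ)
    (W : ℝ) (hV : ∀ j, 0 ≤ V j) (hW : ∑ j ∈ Finset.range N, V j ≤ W)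
    (hy : ∀ j ∈ Finset.range N, |∑ k ∈ A with k % N = j, y k| ≤ Real.sqrt (V j)) :
    |∑ k ∈ A, y k| ≤ Real.sqrt (N * W) := by
  rw [← Finset.sum_fiberwise_of_maps_to (s := A) (t := Finset.range N) (g := fun k => k % N)
    (fun k _ => Finset.mem_range.mpr (Nat.mod_lt k hN))]
  refine (Finset.abs_sum_le_sum_abs _ _).trans ((Finset.sum_le_sum hy).trans ?_)
  refine Real.le_sqrt_of_sq_le (sq_sum_le_card_mul_sum_sq.trans ?_)
  rw [Finset.card_range]
  refine mul_le_mul_of_nonneg_left ?_ (Nat.cast_nonneg N)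
  exact (Finset.sum_congr rfl fun j _ => Real.sq_sqrt (hV j)).le.trans hW

/-! ### The concentration bound -/

/-- **Lemma 5.** Under Assumptions 1, 2 and 3, the almost-sure bound `‖x(t)‖_v ≤ x̄`, and
step sizes `α_t = h/(t+t₀)` with `h > 2/σ`, `t₀ ≥ max(4h, τ)`, for each `t ≥ τ` and each
`δ ∈ (0,1)`, with probability at least `1-δ`,
`‖Σ_{k=τ}^t α_k B̃_{k,t} ε(k)‖_v ≤ 6ε̄ √(((τ+1)h/(σ(t+1+t₀)))·log(2(τ+1)tn/δ))`,
where `ε̄ = 2x̄ + C + w̄/v̲`. -/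
theorem SA_eps_weighted_sum_bound
    {Ω : Type*} {m0 : MeasurableSpace Ω} (μ : Measure Ω) [IsProbabilityMeasure μ]
    (ℱ : Filtration ℕ m0)
    (n : ℕ) (hn : 0 < n) (v : Fin n → ℝ) (hv : ∀ i, 0 < v i)
    -- Assumption 1 (contraction)
    (F : (Fin n → ℝ) → (Fin n → ℝ)) (γ C : ℝ) (hγ0 : 0 < γ) (hγ1 : γ < 1) (hC : 0 < C)
    (hcontr : ∀ x y, vnorm v (F x - F y) ≤ γ * vnorm v (x - y))
    (hFbd : ∀ x, vnorm v (F x) ≤ γ * vnorm v x + C)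
    (xstar : Fin n → ℝ) (hfix : F xstar = xstar)
    -- the asynchronous SA scheme
    (idx : ℕ → Ω → Fin n) (hidx : ∀ t, Measurable[ℱ t] (idx t))
    (w : ℕ → Ω → ℝ) (wbar : ℝ)
    (α : ℕ → ℝ) (hα : ∀ t, α t ∈ Set.Ioc (0 : ℝ) 1)
    (X : ℕ → Ω → Fin n → ℝ) (hX0 : ∀ ω, X 0 ω = 0)
    (hupd : ∀ t ω i, X (t + 1) ω i =
      if i = idx t ω then X t ω i + α t * (F (X t ω) i - X t ω i + w t ω) else X t ω i)
    -- Assumption 2 (martingale difference noise)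
    (hw_meas : ∀ t, Measurable[ℱ (t + 1)] (w t))
    (hw_mean : ∀ t, μ[w t | ℱ t] =ᵐ[μ] 0)
    (hw_bd : ∀ t, ∀ᵐ ω ∂μ, |w t ω| ≤ wbar)
    -- Assumption 3 (sufficient exploration), with `d_{t,i} = P(i_t = i | ℱ_{t-τ})`
    (sg : ℝ) (τ : ℕ) (hsg0 : 0 < sg) (hsg1 : sg < 1) (hτ : 0 < τ)
    (d : ℕ → Fin n → Ω → ℝ)
    (hd : ∀ t i, d t i = μ[(fun ω => if idx t ω = i then (1 : ℝ) else 0) | ℱ (t - τ)])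
    (hexpl : ∀ (i : Fin n) (t : ℕ), τ ≤ t → ∀ᵐ ω ∂μ, sg ≤ d t i ω)
    -- step sizes
    (h t0 : ℝ) (hh : 2 / sg < h) (ht0 : max (4 * h) (τ : ℝ) ≤ t0)
    (hstep : ∀ t, α t = h / ((t : ℝ) + t0))
    -- almost sure boundedness of the iterates
    (xbar : ℝ) (hXbd : ∀ t, ∀ᵐ ω ∂μ, vnorm v (X t ω) ≤ xbar)
    -- the noise vector `ε(t)`
    (eps : ℕ → Ω → Fin n → ℝ)
    (heps : ∀ t ω i, eps t ω i =
      ((if idx t ω = i then (1 : ℝ) else 0) - d t i ω) *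
          (F (X (t - τ) ω) i - X (t - τ) ω i) +
        (if idx t ω = i then w t ω else 0)) :
    ∀ t, τ ≤ t → ∀ δ : ℝ, 0 < δ → δ < 1 →
      ENNReal.ofReal (1 - δ) ≤
        μ {ω | vnorm v (fun i => ∑ k ∈ Finset.Icc τ t,
            α k * ((∏ ℓ ∈ Finset.Icc (k + 1) t, (1 - α ℓ * d ℓ i ω)) * eps k ω i)) ≤
          6 * (2 * xbar + C + wbar / ⨅ i, v i) *
            Real.sqrt ((((τ : ℝ) + 1) * h / (sg * ((t : ℝ) + 1 + t0))) *
              Real.log (2 * ((τ : ℝ) + 1) * (t : ℝ) * (n : ℝ) / δ))} := by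
  have hne : Nonempty (Fin n) := ⟨⟨0, hn⟩⟩
  have hFc : Continuous F := continuous_of_vnorm_contr hn hv F γ hγ0 hcontr
  have hXm := iterates_measurable ℱ n F hFc idx hidx w α X hX0 hupd hw_meas
  intro t ht δ hδ0 hδ1
  have hvinf : 0 < ⨅ i, v i := by
    obtain ⟨j, hj⟩ := exists_eq_ciInf_of_finite (f := v)
    rw [← hj]; exact hv j
  obtain ⟨ω₀, hω₀x, hω₀w⟩ := ((hXbd 0).and (hw_bd 0)).exists
  have hx0 : 0 ≤ xbar := (vnorm_nonneg hv _).trans hω₀x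
  have hw0 : 0 ≤ wbar := (abs_nonneg _).trans hω₀w
  set e : ℝ := 2 * xbar + C + wbar / ⨅ i, v i with he
  have he0 : 0 ≤ e := by positivity
  -- the noise bound in coordinate `i`, as `w̄ ≤ (w̄ / v̲) v_i`
  have hev : ∀ i, (2 * xbar + C) * v i + wbar ≤ e * v i := fun i => by
    have h1 : (⨅ i, v i) ≤ v i := ciInf_le (Set.finite_range v).bddBelow i
    have h2 : wbar ≤ wbar / (⨅ i, v i) * v i := by
      rw [div_mul_eq_mul_div, le_div_iff₀ hvinf]
      exact mul_le_mul_of_nonneg_left h1 hw0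
    rw [he, add_mul (2 * xbar + C)]
    linarith
  have hsgh : 2 ≤ sg * h := by
    rw [div_lt_iff₀ hsg0] at hh
    linarith
  have hh0 : 0 < h := lt_trans (by positivity) hh
  have ht00 : 0 < t0 := by
    have := (le_max_left (4 * h) (τ : ℝ)).trans ht0
    linarith
  have hfac : ∀ l, 0 < 1 - α l * sg := fun l => by
    nlinarith [(hα l).1, (hα l).2]
  -- the deterministic weights replacing the random `α_k B̃_{k,t}`
  set q : ℕ → ℝ := fun k => α k * ∏ l ∈ Finset.Icc (k + 1) t, (1 - α l * sg) with hq
  have hq0 : ∀ k, 0 ≤ q k := fun k =>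
    mul_nonneg (hα k).1.le (Finset.prod_nonneg fun l _ => (hfac l).le)
  have H : ∀ i, LaggedMD μ ℱ τ (fun k ω => q k * eps k ω i) (fun k => q k * (e * v i)) := fun i =>
    ((noise_laggedMD μ ℱ n v hv F γ C hγ1 hFc hFbd idx hidx w wbar X hXm hw_meas hw_mean hw_bd τ d
      hd xbar hXbd eps heps i).mono fun _ => hev i).const_mul q hq0
  have ht1 : (1 : ℝ) ≤ t := by exact_mod_cast (show 1 ≤ t by omega)
  have hn1 : (1 : ℝ) ≤ n := by exact_mod_cast hn
  set R : ℝ := 2 * ((τ : ℝ) + 1) * (t : ℝ) * (n : ℝ) / δ with hR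
  set L : ℝ := Real.log R with hLdef
  have hRpos : 0 < R := by positivity
  have hR1 : 1 < R := by
    rw [hR, lt_div_iff₀ hδ0]
    have : (1 : ℝ) ≤ ((τ : ℝ) + 1) * t * n :=
      one_le_mul_of_one_le_of_one_le
        (one_le_mul_of_one_le_of_one_le (by linarith [Nat.cast_nonneg (α := ℝ) τ]) ht1) hn1
    nlinarith
  have hL : 0 < L := Real.log_pos hR1
  -- residue classes modulo `τ + 1` inside `[k₀, t]`, and their variance proxies
  let A : ℕ → ℕ → Finset ℕ := fun k0 j => (Finset.Icc k0 t).filter fun k => k % (τ + 1) = j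
  let V : Fin n → ℕ → ℝ := fun i j => ∑ k ∈ A τ j, (q k * (e * v i)) ^ 2
  let I : Finset (Fin n × ℕ × ℕ) := Finset.univ ×ˢ Finset.Icc τ t ×ˢ Finset.range (τ + 1)
  let bad : Fin n × ℕ × ℕ → Set Ω := fun p =>
    {ω | Real.sqrt (2 * V p.1 p.2.2 * L) < |∑ k ∈ A p.2.1 p.2.2, q k * eps k ω p.1|}
  have hbad : ∀ p ∈ I, μ (bad p) ≤ ENNReal.ofReal (2 * Real.exp (-L)) := by
    rintro ⟨i, k0, j⟩ hp
    simp only [I, Finset.mem_product, Finset.mem_Icc, Finset.mem_univ, true_and] at hp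
    refine (H i).tail_le (A k0 j) (fun a ha b hb hab => ?_) (V i j) L ?_ hL
    · simp only [A, Finset.mem_filter] at ha hb
      -- distinct congruent indices differ by at least `τ + 1`
      have h1 : a ≡ b [MOD (τ + 1)] := ha.2.trans hb.2.symm
      have h2 := (Nat.modEq_iff_dvd' hab.le).mp h1
      have := Nat.le_of_dvd (by omega) h2
      omega
    · refine Finset.sum_le_sum_of_subset_of_nonneg ?_ fun k _ _ => sq_nonneg _
      exact Finset.filter_subset_filter _ (Finset.Icc_subset_Icc_left hp.1.1)
  have hunion : μ (⋃ p ∈ I, bad p) ≤ ENNReal.ofReal δ := by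
    refine (measure_biUnion_finset_le I bad).trans ((Finset.sum_le_sum hbad).trans ?_)
    rw [Finset.sum_const, nsmul_eq_mul, ← ENNReal.ofReal_natCast, ← ENNReal.ofReal_mul (by positivity)]
    refine ENNReal.ofReal_le_ofReal ?_
    have hcard : (I.card : ℝ) ≤ n * (t * (τ + 1)) := by
      have : I.card ≤ n * (t * (τ + 1)) := by
        simp only [I, Finset.card_product, Finset.card_univ, Fintype.card_fin, Nat.card_Icc,
          Finset.card_range]
        refine Nat.mul_le_mul_left _ (Nat.mul_le_mul_right _ ?_)
        omega
      exact_mod_cast this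
    have hexp : 2 * Real.exp (-L) = δ / (n * (t * (τ + 1))) := by
      rw [Real.exp_neg, hLdef, Real.exp_log hRpos, hR]
      field_simp
    rw [hexp]
    calc (I.card : ℝ) * (δ / (n * (t * (τ + 1))))
        ≤ (n * (t * (τ + 1))) * (δ / (n * (t * (τ + 1)))) :=
          mul_le_mul_of_nonneg_right hcard (by positivity)
      _ = δ := by field_simp
  have hd1 : ∀ l i, ∀ᵐ ω ∂μ, d l i ω ≤ 1 := fun l i => by
    rw [hd]
    have hm : Measurable (fun ω => if idx l ω = i then (1 : ℝ) else 0) :=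
      Measurable.ite (((hidx l).mono (ℱ.le _) le_rfl) (measurableSet_singleton i))
        measurable_const measurable_const
    refine (condExp_indicator_mem (ℱ.le _) _ (Integrable.of_bound hm.aestronglyMeasurable 1
      (ae_of_all _ fun ω => ?_)) (fun ω => ?_) fun ω => ?_).mono fun ω h => h.2
    all_goals split_ifs <;> simp
  have hdall : ∀ᵐ ω ∂μ, ∀ l i, τ ≤ l → sg ≤ d l i ω ∧ d l i ω ≤ 1 := by
    rw [ae_all_iff]; intro l
    rw [ae_all_iff]; intro i
    by_cases hl : τ ≤ l
    · filter_upwards [hexpl i l hl, hd1 l i] with ω h1 h2 _ using ⟨h1, h2⟩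
    · exact ae_of_all _ fun ω h => absurd h hl
  set good : Set Ω := {ω | vnorm v (fun i => ∑ k ∈ Finset.Icc τ t,
            α k * ((∏ ℓ ∈ Finset.Icc (k + 1) t, (1 - α ℓ * d ℓ i ω)) * eps k ω i)) ≤
          6 * e * Real.sqrt ((((τ : ℝ) + 1) * h / (sg * ((t : ℝ) + 1 + t0))) * L)} with hgood
  have hVsum : ∀ i, ∑ j ∈ Finset.range (τ + 1), 2 * V i j * L ≤
      (2 * (e * v i)) ^ 2 * (h / (sg * ((t : ℝ) + 1 + t0)) * L) := fun i => by
    have h1 : ∑ j ∈ Finset.range (τ + 1), V i j = (∑ k ∈ Finset.Icc τ t, q k ^ 2) * (e * v i) ^ 2 := by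
      simp only [V, A]
      rw [Finset.sum_fiberwise_of_maps_to (fun k _ => Finset.mem_range.mpr
        (Nat.mod_lt k (Nat.succ_pos τ))), Finset.sum_mul]
      exact Finset.sum_congr rfl fun k _ => mul_pow _ _ _
    have h2 := sum_sq_weights_le α h t0 sg τ hτ hsg0 hsg1 ht00 hsgh hα hstep t
    rw [← Finset.sum_mul, ← Finset.mul_sum, h1]
    have h3 := mul_le_mul_of_nonneg_right h2 (mul_nonneg (sq_nonneg (e * v i)) hL.le)
    calc _ = 2 * ((∑ k ∈ Finset.Icc τ t, q k ^ 2) * ((e * v i) ^ 2 * L)) := by ring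
      _ ≤ 2 * (2 * h / (sg * ((t : ℝ) + 1 + t0)) * ((e * v i) ^ 2 * L)) := by linarith
      _ = _ := by ring
  have hsub : ∀ ω, (∀ l i, τ ≤ l → sg ≤ d l i ω ∧ d l i ω ≤ 1) → ω ∉ (⋃ p ∈ I, bad p) →
      ω ∈ good := by
    intro ω hω hnb
    refine vnorm_le hn hv _ _ fun i => ?_
    have htail : ∀ k0 ∈ Finset.Icc τ t, |∑ k ∈ Finset.Icc k0 t, q k * eps k ω i| ≤
        2 * (e * v i) * Real.sqrt ((((τ : ℝ) + 1) * h / (sg * ((t : ℝ) + 1 + t0))) * L) := by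
      intro k0 hk0
      have hres := abs_sum_le_of_residues (fun k => q k * eps k ω i) (Finset.Icc k0 t) (τ + 1)
        (Nat.succ_pos τ) (fun j => 2 * V i j * L) _ (fun j => by
          have : 0 ≤ V i j := Finset.sum_nonneg fun k _ => sq_nonneg _
          positivity) (hVsum i) (fun j hj => by
          by_contra hc
          refine hnb (Set.mem_iUnion₂.mpr ⟨(i, k0, j), ?_, not_le.mp hc⟩)
          exact Finset.mem_product.mpr ⟨Finset.mem_univ i, Finset.mem_product.mpr ⟨hk0, hj⟩⟩)
      refine hres.trans (le_of_eq ?_)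
      have hevn : 0 ≤ 2 * (e * v i) := by have := hv i; positivity
      rw [← Real.sqrt_sq hevn, ← Real.sqrt_mul (sq_nonneg _), Real.sqrt_sq hevn]
      congr 1
      push_cast
      ring
    have hdamp := abs_damped_sum_le (fun k => q k * eps k ω i)
      (fun l => (1 - α l * d l i ω) / (1 - α l * sg)) _ τ t ht (fun l hl => by
        rw [Finset.mem_Icc] at hl
        obtain ⟨h1, h2⟩ := hω l i (by omega)
        have h3 := (hα l).1
        have h4 := (hα l).2
        refine ⟨div_nonneg (by nlinarith) (hfac l).le, (div_le_one (hfac l)).mpr ?_⟩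
        nlinarith) 0 (fun k0 hk0 => by rw [zero_add]; exact htail k0 hk0)
    rw [zero_add] at hdamp
    have hsum : ∑ k ∈ Finset.Icc τ t,
        α k * ((∏ ℓ ∈ Finset.Icc (k + 1) t, (1 - α ℓ * d ℓ i ω)) * eps k ω i) =
        ∑ k ∈ Finset.Icc τ t, (∏ l ∈ Finset.Icc (k + 1) t, (1 - α l * d l i ω) / (1 - α l * sg)) *
          (q k * eps k ω i) := by
      refine Finset.sum_congr rfl fun k _ => ?_
      have hp : ∏ l ∈ Finset.Icc (k + 1) t, (1 - α l * sg) ≠ 0 :=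
        Finset.prod_ne_zero_iff.mpr fun l _ => (hfac l).ne'
      rw [Finset.prod_div_distrib]
      simp only [hq]
      generalize ∏ l ∈ Finset.Icc (k + 1) t, (1 - α l * sg) = P at hp ⊢
      field_simp
    rw [hsum]
    refine hdamp.trans ?_
    have hsq := Real.sqrt_nonneg ((((τ : ℝ) + 1) * h / (sg * ((t : ℝ) + 1 + t0))) * L)
    have hvi := hv i
    have : 0 ≤ e * v i *
        Real.sqrt ((((τ : ℝ) + 1) * h / (sg * ((t : ℝ) + 1 + t0))) * L) := by positivity
    nlinarith
  have hcompl : μ goodᶜ ≤ ENNReal.ofReal δ := by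
    refine (measure_mono_ae ?_).trans hunion
    filter_upwards [hdall] with ω hω hng
    by_contra hnb
    exact hng (hsub ω hω hnb)
  -- subadditivity suffices, so the measurability of `good` is not needed
  rw [ENNReal.ofReal_sub _ hδ0.le, ENNReal.ofReal_one, tsub_le_iff_right]
  calc (1 : ENNReal) = μ Set.univ := measure_univ.symm
    _ ≤ μ good + μ goodᶜ := measure_univ_le_add_compl good
    _ ≤ μ good + ENNReal.ofReal δ := by gcongr
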